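/- (p-version of Lindquist's criterion) Let n ≥ 2, p > 1 not an even integer, f ∈ C_e(S^{n-1}) a continuous even function, and H(x) = ∫_{S^{n-1}} |⟨x,ξ⟩|^p f(ξ) dξ. Then H is a convex function on R^n if and only if for all u ∈ S^{n-1} and all x ∈ R^n, ∫_{S^{n-1}} |⟨u,ξ⟩|^{p−2} ⟨x,ξ⟩^2 f(ξ) dξ ≥ 0. -/

import Mathlib

open MeasureTheory Real Set Metric
open scoped RealInnerProductSpace ENNReal MeasureTheory

noncomputable section

/-!
On a line `t ↦ x + t • v` the formal second derivative of `∫ |⟪·, ξ⟫| ^ p * f ξ` is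
`p * (p - 1) * ∫ |⟪·, ξ⟫| ^ (p - 2) * ⟪v, ξ⟫ ^ 2 * f ξ`, whose sign is the criterion. The first
derivative is obtained by differentiating under the integral. For `p < 2` a second such
differentiation meets a singular kernel; instead, the kernel is integrated along the line, where
`|s| ^ (p - 2)` has the continuous antiderivative `(p - 1)⁻¹ * (|s| ^ (p - 2) * s)`, and Fubini
gives the increments of the first derivative as integrals of the expected second derivative. This
alone makes the criterion sufficient. For its necessity, the singular transform is continuous away
from the origin by invariance of the surface measure under reflections, so the fundamental theorem
of calculus turns the integrated formula into a pointwise one.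
-/

section

open Filter Module ProbabilityTheory Topology

variable {E : Type*} [NormedAddCommGroup E] [InnerProductSpace ℝ E]

section ConvexOnLines

lemma convexOn_univ_iff_forall_line {V : Type*} [AddCommGroup V] [Module ℝ V] {H : V → ℝ} :
    ConvexOn ℝ univ H ↔ ∀ x v, ConvexOn ℝ univ fun t : ℝ ↦ H (x + t • v) := by
  refine ⟨fun hH x v ↦ ?_, fun hH ↦ ⟨convex_univ, fun x _ y _ a b ha hb hab ↦ ?_⟩⟩
  · refine (hH.comp_affineMap (AffineMap.lineMap x (x + v))).congr fun t _ ↦ ?_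
    simp [AffineMap.lineMap_apply, add_comm]
  · have hpoint : x + b • (y - x) = a • x + b • y := by
      rw [← eq_sub_iff_add_eq] at hab
      subst hab
      module
    simpa [hpoint] using (hH x (y - x)).2 (mem_univ 0) (mem_univ 1) ha hb hab

end ConvexOnLines

section Reflections

lemma reflection_span_add_apply {u v : E} (h : ‖u‖ = ‖v‖) : (ℝ ∙ (u + v)).reflection u = v := by
  have hneg := Submodule.reflection_sub (v := u) (w := -v) (by simpa using h)
  rw [Submodule.reflection_orthogonal_apply, sub_neg_eq_add] at hneg
  exact neg_injective hneg

lemma continuousAt_reflection_span_singleton {u : E} (hu : u ≠ 0) (ξ : E) :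
    ContinuousAt (fun w ↦ (ℝ ∙ w).reflection ξ) u := by
  simp only [Submodule.reflection_singleton_apply]
  have hnorm : ‖u‖ ^ 2 ≠ 0 := pow_ne_zero 2 (norm_ne_zero_iff.2 hu)
  have hcoef : ContinuousAt (fun w ↦ ⟪w, ξ⟫ / ‖w‖ ^ 2) u :=
    ContinuousAt.div (by fun_prop) (by fun_prop) hnorm
  exact ((hcoef.smul continuousAt_id).const_smul 2).sub continuousAt_const

end Reflections

section SurfaceMeasure

lemma hemisphere_subset_image_stereoInvFunAux {v : E} (hv : ‖v‖ = 1) :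
    {ξ ∈ sphere (0 : E) 1 | ⟪v, ξ⟫ ≤ 0} ⊆
      (stereoInvFunAux v ∘ Subtype.val) '' closedBall (0 : (ℝ ∙ v)ᗮ) 2 := by
  rintro ξ ⟨hξ, hvξ⟩
  have hne : ξ ≠ v := by
    rintro rfl
    norm_num [real_inner_self_eq_norm_sq, hv] at hvξ
  refine ⟨stereoToFun v ξ, ?_, congrArg Subtype.val (stereo_left_inv hv (x := ⟨ξ, hξ⟩) hne)⟩
  have hproj : ‖(ℝ ∙ v)ᗮ.orthogonalProjectionOnto ξ‖ ≤ 1 := by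
    simpa [mem_sphere_zero_iff_norm.1 hξ] using
      (ℝ ∙ v)ᗮ.norm_orthogonalProjectionOnto_apply_le ξ
  have hcoef : ‖2 / (1 - ⟪v, ξ⟫)‖ ≤ 2 := by
    rw [Real.norm_of_nonneg (by apply div_nonneg <;> linarith)]
    exact div_le_self two_pos.le (by linarith)
  rw [mem_closedBall_zero_iff, stereoToFun_apply, innerSL_apply_apply, norm_smul]
  simpa using mul_le_mul hcoef hproj (norm_nonneg _) two_pos.le

variable [MeasurableSpace E] [BorelSpace E]

lemma measurePreserving_restrict_sphere (d : ℝ) (R : E ≃ₗᵢ[ℝ] E) :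
    MeasurePreserving R ((μH[d] : Measure E).restrict (sphere 0 1))
      ((μH[d] : Measure E).restrict (sphere 0 1)) := by
  have hR := (R.toIsometryEquiv.measurePreserving_hausdorffMeasure d).restrict_preimage
    (s := sphere 0 1) isClosed_sphere.measurableSet
  have hpre : R.toIsometryEquiv ⁻¹' sphere 0 1 = sphere 0 1 := by
    ext ξ
    simp
  rwa [hpre] at hR

variable [FiniteDimensional ℝ E]

lemma hausdorffMeasure_hemisphere_lt_top {v : E} (hv : ‖v‖ = 1) :
    μH[(finrank ℝ E : ℝ) - 1] {ξ ∈ sphere (0 : E) 1 | ⟪v, ξ⟫ ≤ 0} < ∞ := by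
  have hdim : (finrank ℝ (ℝ ∙ v)ᗮ : ℝ) = finrank ℝ E - 1 := by
    have hv₀ : v ≠ 0 := norm_ne_zero_iff.1 (hv ▸ one_ne_zero)
    rw [← Submodule.finrank_add_finrank_orthogonal (ℝ ∙ v), finrank_span_singleton hv₀]
    push_cast
    ring
  have hsmooth : ContDiff ℝ 1 (stereoInvFunAux v ∘ (Subtype.val : (ℝ ∙ v)ᗮ → E)) :=
    contDiff_stereoInvFunAux.comp (ℝ ∙ v)ᗮ.subtypeL.contDiff
  obtain ⟨K, hK⟩ := (hsmooth.locallyLipschitz.locallyLipschitzOn).exists_lipschitzOnWith_of_compact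
    (isCompact_closedBall (0 : (ℝ ∙ v)ᗮ) 2)
  rw [← hdim]
  calc μH[(finrank ℝ (ℝ ∙ v)ᗮ : ℝ)] {ξ ∈ sphere (0 : E) 1 | ⟪v, ξ⟫ ≤ 0}
      ≤ K ^ (finrank ℝ (ℝ ∙ v)ᗮ : ℝ) *
          μH[(finrank ℝ (ℝ ∙ v)ᗮ : ℝ)] (closedBall (0 : (ℝ ∙ v)ᗮ) 2) :=
        (measure_mono (hemisphere_subset_image_stereoInvFunAux hv)).trans
          (hK.hausdorffMeasure_image_le (Nat.cast_nonneg _))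
    _ < ∞ := ENNReal.mul_lt_top (ENNReal.rpow_lt_top_of_nonneg (Nat.cast_nonneg _)
        ENNReal.coe_ne_top) (isCompact_closedBall _ _).measure_lt_top

lemma hausdorffMeasure_sphere_lt_top :
    μH[(finrank ℝ E : ℝ) - 1] (sphere (0 : E) 1) < ∞ := by
  cases subsingleton_or_nontrivial E
  · simp [sphere_eq_empty_of_subsingleton]
  obtain ⟨v, hv⟩ := exists_norm_eq E zero_le_one
  have hcover : sphere (0 : E) 1 ⊆
      {ξ ∈ sphere (0 : E) 1 | ⟪v, ξ⟫ ≤ 0} ∪ {ξ ∈ sphere (0 : E) 1 | ⟪-v, ξ⟫ ≤ 0} := by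
    intro ξ hξ
    rcases le_total ⟪v, ξ⟫ 0 with h | h
    · exact .inl ⟨hξ, h⟩
    · exact .inr ⟨hξ, by simpa using h⟩
  exact (measure_mono hcover).trans_lt (measure_union_lt_top
    (hausdorffMeasure_hemisphere_lt_top hv)
    (hausdorffMeasure_hemisphere_lt_top (by rwa [norm_neg])))

end SurfaceMeasure

section AbsRpow

variable {q : ℝ}

lemma continuous_abs_rpow_mul_self (hq : -1 < q) : Continuous fun s : ℝ ↦ |s| ^ q * s := by
  have hderiv : deriv (fun s : ℝ ↦ ‖s‖ ^ (q + 2)) = fun s ↦ (q + 2) * (|s| ^ q * s) := by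
    ext s
    rw [(hasDerivAt_norm_rpow s (by linarith)).deriv, Real.norm_eq_abs]
    ring_nf
  have hcont := (contDiff_norm_rpow (E := ℝ) (p := q + 2) (by linarith)).continuous_deriv le_rfl
  rw [hderiv] at hcont
  exact (hcont.const_mul (q + 2)⁻¹).congr fun s ↦ inv_mul_cancel_left₀ (by linarith) _

lemma hasDerivAt_abs_rpow_mul_self {s : ℝ} (hs : s ≠ 0) :
    HasDerivAt (fun s : ℝ ↦ |s| ^ q * s) ((q + 1) * |s| ^ q) s := by
  have hs' : |s| ≠ 0 := abs_ne_zero.2 hs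
  refine (((hasDerivAt_abs hs).rpow_const (p := q) (.inl hs')).mul (hasDerivAt_id s)).congr_deriv ?_
  rw [rpow_sub_one hs', id, mul_one]
  field_simp
  linear_combination q * sign_mul_self s

lemma intervalIntegrable_abs_rpow (hq : -1 < q) (a b : ℝ) :
    IntervalIntegrable (fun s : ℝ ↦ |s| ^ q) volume a b := by
  have hzero (c : ℝ) : IntervalIntegrable (fun s : ℝ ↦ |s| ^ q) volume 0 c :=
    intervalIntegrable_of_even (by simp) fun x hx ↦
      (intervalIntegral.intervalIntegrable_rpow' hq).congr fun s hs ↦ by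
        rw [uIoc_of_le hx.le] at hs
        simp only [abs_of_pos hs.1]
  exact (hzero a).symm.trans (hzero b)

lemma integral_abs_rpow (hq : -1 < q) (a b : ℝ) :
    ∫ s in a..b, |s| ^ q = (q + 1)⁻¹ * (|b| ^ q * b - |a| ^ q * a) := by
  have hftc := integral_eq_of_hasDerivAt_off_countable _ _ (countable_singleton (0 : ℝ))
    (continuous_abs_rpow_mul_self hq).continuousOn (fun s hs ↦ hasDerivAt_abs_rpow_mul_self hs.2)
    ((intervalIntegrable_abs_rpow hq a b).const_mul (q + 1))
  rw [← hftc, intervalIntegral.integral_const_mul, inv_mul_cancel_left₀ (by linarith)]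

lemma intervalIntegrable_abs_add_mul_rpow (hq : -1 < q) {a b : ℝ} (hb : b ≠ 0) (t₁ t₂ : ℝ) :
    IntervalIntegrable (fun s : ℝ ↦ |a + b * s| ^ q) volume t₁ t₂ := by
  simpa [hb] using ((intervalIntegrable_abs_rpow hq (a + b * t₁) (a + b * t₂)).comp_add_left
    a).comp_mul_left (c := b)

lemma mul_integral_abs_add_mul_rpow (hq : -1 < q) (a b t₁ t₂ : ℝ) :
    b * ∫ s in t₁..t₂, |a + b * s| ^ q =
      (q + 1)⁻¹ * (|a + b * t₂| ^ q * (a + b * t₂) - |a + b * t₁| ^ q * (a + b * t₁)) := by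
  rw [intervalIntegral.mul_integral_comp_add_mul (f := fun s ↦ |s| ^ q), integral_abs_rpow hq]

lemma integrable_abs_rpow_gaussianReal (hq : -1 < q) :
    Integrable (fun t : ℝ ↦ |t| ^ q) (gaussianReal 0 1) := by
  have hpos : IntegrableOn (fun t : ℝ ↦ |t| ^ q * rexp (-(1 / 2) * t ^ 2)) (Ioi 0) :=
    (integrableOn_rpow_mul_exp_neg_mul_sq one_half_pos hq).congr_fun
      (fun t ht ↦ by simp only [abs_of_pos (mem_Ioi.1 ht)]) measurableSet_Ioi
  have hneg : IntegrableOn (fun t : ℝ ↦ |t| ^ q * rexp (-(1 / 2) * t ^ 2)) (Iio 0) := by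
    simpa using hpos.comp_neg
  have hint : Integrable fun t : ℝ ↦ |t| ^ q * rexp (-(1 / 2) * t ^ 2) := by
    rw [← integrableOn_univ, ← Iio_union_Ici (a := (0 : ℝ)), integrableOn_union,
      integrableOn_Ici_iff_integrableOn_Ioi]
    exact ⟨hneg, hpos⟩
  rw [gaussianReal_of_var_ne_zero 0 one_ne_zero, integrable_withDensity_iff_integrable_smul']
  · refine (hint.const_mul (√(2 * π))⁻¹).congr (ae_of_all _ fun t ↦ ?_)
    simp only [toReal_gaussianPDF, gaussianPDFReal_def, NNReal.coe_one, smul_eq_mul]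
    ring_nf
  · exact measurable_gaussianPDF 0 1
  · exact ae_of_all _ fun _ ↦ gaussianPDF_lt_top

end AbsRpow

section KernelIntegrability

variable [MeasurableSpace E] {σ : Measure E} {q : ℝ}

lemma integrable_abs_inner_rpow_of_ne_zero
    (hinv : ∀ R : E ≃ₗᵢ[ℝ] E, MeasurePreserving R σ σ) {u y : E} (hy : y ≠ 0)
    (hint : Integrable (fun ξ ↦ |⟪y, ξ⟫| ^ q) σ) : Integrable (fun ξ ↦ |⟪u, ξ⟫| ^ q) σ := by
  set c : ℝ := ‖u‖ / ‖y‖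
  have hc : 0 ≤ c := by positivity
  have hnorm : ‖u‖ = ‖c • y‖ := by
    rw [norm_smul, Real.norm_of_nonneg hc, div_mul_cancel₀ _ (norm_ne_zero_iff.2 hy)]
  set R : E ≃ₗᵢ[ℝ] E := (ℝ ∙ (u + c • y)).reflection
  have hinner (ξ : E) : ⟪u, ξ⟫ = c * ⟪y, R ξ⟫ := by
    rw [← R.inner_map_map u ξ, reflection_span_add_apply hnorm, real_inner_smul_left]
  refine (((hinv R).integrable_comp_of_integrable hint).const_mul (c ^ q)).congr
    (ae_of_all _ fun ξ ↦ ?_)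
  simp only [Function.comp_apply, hinner, abs_mul, abs_of_nonneg hc, mul_rpow hc (abs_nonneg _)]

variable [BorelSpace E] [FiniteDimensional ℝ E]

lemma map_inner_stdGaussian {ξ : E} (hξ : ‖ξ‖ = 1) :
    (stdGaussian E).map (fun y ↦ ⟪y, ξ⟫) = gaussianReal 0 1 := by
  have hmap := IsGaussian.map_eq_gaussianReal (μ := stdGaussian E) (innerSL ℝ ξ)
  rw [integral_strongDual_stdGaussian, variance_dual_stdGaussian, innerSL_apply_norm, hξ] at hmap
  simpa [Function.comp_def, real_inner_comm] using hmap

lemma ae_stdGaussian_ne_zero [Nontrivial E] : ∀ᵐ y ∂stdGaussian E, y ≠ 0 := by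
  obtain ⟨e, he⟩ := exists_norm_eq E zero_le_one
  have := nullSingletonClass_gaussianReal (μ := 0) (v := 1) one_ne_zero
  have hreal : ∀ᵐ t ∂gaussianReal 0 1, t ≠ 0 := by simp [ae_iff]
  rw [← map_inner_stdGaussian he] at hreal
  filter_upwards [ae_of_ae_map (by fun_prop) hreal] with y hy
  rintro rfl
  simp at hy

lemma integrable_abs_inner_rpow_stdGaussian_prod [IsFiniteMeasure σ]
    (hσ : ∀ᵐ ξ ∂σ, ξ ∈ sphere (0 : E) 1) (hq : -1 < q) :
    Integrable (fun z : E × E ↦ |⟪z.1, z.2⟫| ^ q) ((stdGaussian E).prod σ) := by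
  have hmeas : Measurable fun z : E × E ↦ |⟪z.1, z.2⟫| ^ q := by fun_prop
  rw [integrable_prod_iff' hmeas.aestronglyMeasurable]
  constructor
  · filter_upwards [hσ] with ξ hξ
    have hgauss := integrable_abs_rpow_gaussianReal hq
    rw [← map_inner_stdGaussian (mem_sphere_zero_iff_norm.1 hξ)] at hgauss
    exact hgauss.comp_measurable (by fun_prop)
  · refine (integrable_const (∫ t, ‖|t| ^ q‖ ∂gaussianReal 0 1)).congr ?_
    filter_upwards [hσ] with ξ hξ
    rw [← map_inner_stdGaussian (mem_sphere_zero_iff_norm.1 hξ),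
      integral_map (by fun_prop)
        (by fun_prop : Measurable fun t : ℝ ↦ ‖|t| ^ q‖).aestronglyMeasurable]

-- Averaging the direction `u` over a Gaussian turns the singular kernel into a one-dimensional
-- moment, so some direction gives an integrable kernel; invariance then gives all of them.
lemma integrable_abs_inner_rpow [IsFiniteMeasure σ] (hσ : ∀ᵐ ξ ∂σ, ξ ∈ sphere (0 : E) 1)
    (hinv : ∀ R : E ≃ₗᵢ[ℝ] E, MeasurePreserving R σ σ) (hq : -1 < q) (u : E) :
    Integrable (fun ξ ↦ |⟪u, ξ⟫| ^ q) σ := by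
  rcases eq_or_ne u 0 with rfl | hu
  · simp
  have := nontrivial_of_ne u 0 hu
  obtain ⟨y, hint, hy⟩ := ((integrable_abs_inner_rpow_stdGaussian_prod hσ hq).prod_right_ae.and
    ae_stdGaussian_ne_zero).exists
  exact integrable_abs_inner_rpow_of_ne_zero hinv hy hint

end KernelIntegrability

section CosineTransform

variable [MeasurableSpace E]

/-- The `L^q`-cosine transform of the density `f` against `σ`, a function on the whole space which
is homogeneous of degree `q`. In the application `σ` is the surface measure of the unit sphere. -/
def cosineTransform (σ : Measure E) (q : ℝ) (f : E → ℝ) (u : E) : ℝ :=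
  ∫ ξ, |⟪u, ξ⟫| ^ q * f ξ ∂σ

/-- The odd companion of the `L^q`-cosine transform: its kernel `|s| ^ q * s` is, up to constant
factors, the derivative of `|s| ^ (q + 2)` and an antiderivative of `|s| ^ q`. -/
def oddCosineTransform (σ : Measure E) (q : ℝ) (f : E → ℝ) (u : E) : ℝ :=
  ∫ ξ, |⟪u, ξ⟫| ^ q * ⟪u, ξ⟫ * f ξ ∂σ

variable {σ : Measure E} {p q : ℝ} {f : E → ℝ}

lemma cosineTransform_smul {c : ℝ} (hc : 0 ≤ c) (u : E) :
    cosineTransform σ q f (c • u) = c ^ q * cosineTransform σ q f u := by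
  simp only [cosineTransform, ← integral_const_mul, real_inner_smul_left, abs_mul,
    abs_of_nonneg hc, mul_rpow hc (abs_nonneg _), mul_assoc]

lemma cosineTransform_nonneg_of_sphere [Nontrivial E]
    (h : ∀ e ∈ sphere (0 : E) 1, 0 ≤ cosineTransform σ q f e) (u : E) :
    0 ≤ cosineTransform σ q f u := by
  obtain ⟨e, he, hue⟩ : ∃ e ∈ sphere (0 : E) 1, ‖u‖ • e = u := by
    rcases eq_or_ne u 0 with rfl | hu
    · obtain ⟨e, he⟩ := exists_norm_eq E zero_le_one
      exact ⟨e, mem_sphere_zero_iff_norm.2 he, by simp⟩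
    · exact ⟨NormedSpace.normalize u,
        mem_sphere_zero_iff_norm.2 (NormedSpace.norm_normalize_eq_one_iff.2 hu),
        NormedSpace.norm_smul_normalize u⟩
  rw [← hue, cosineTransform_smul (norm_nonneg u)]
  exact mul_nonneg (rpow_nonneg (norm_nonneg u) q) (h e he)

variable [BorelSpace E]

lemma cosineTransform_map (hinv : ∀ R : E ≃ₗᵢ[ℝ] E, MeasurePreserving R σ σ) (R : E ≃ₗᵢ[ℝ] E)
    (u : E) : cosineTransform σ q f (R u) = cosineTransform σ q (f ∘ R) u := by
  rw [cosineTransform, ← (hinv R).integral_comp R.toHomeomorph.measurableEmbedding]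
  simp only [cosineTransform, R.inner_map_map, Function.comp_apply]

variable [FiniteDimensional ℝ E] [IsFiniteMeasure σ]

lemma integrable_of_continuousOn_sphere (hσ : ∀ᵐ ξ ∂σ, ξ ∈ sphere (0 : E) 1)
    (hf : ContinuousOn f (sphere 0 1)) : Integrable f σ := by
  have hint := hf.integrableOn_compact (μ := σ) (isCompact_sphere 0 1)
  rwa [IntegrableOn, Measure.restrict_eq_self_of_ae_mem hσ] at hint

-- The kernel is singular where `⟪w, ξ⟫ = 0`, a set moving with `w`; reflecting `u` to `w` moves
-- the dependence on `w` into the continuous density.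
lemma continuousOn_cosineTransform_sphere (hσ : ∀ᵐ ξ ∂σ, ξ ∈ sphere (0 : E) 1)
    (hinv : ∀ R : E ≃ₗᵢ[ℝ] E, MeasurePreserving R σ σ) (hq : -1 < q)
    (hf : ContinuousOn f (sphere 0 1)) :
    ContinuousOn (cosineTransform σ q f) (sphere 0 1) := by
  intro u hu
  have hu₀ : u + u ≠ 0 := by
    rw [← two_smul ℝ u]
    exact smul_ne_zero two_ne_zero (ne_of_mem_sphere hu one_ne_zero)
  set R : E → E ≃ₗᵢ[ℝ] E := fun w ↦ (ℝ ∙ (u + w)).reflection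
  have hR_mem {ξ : E} (hξ : ξ ∈ sphere (0 : E) 1) (w : E) : R w ξ ∈ sphere (0 : E) 1 := by
    simpa using hξ
  have hRu {w : E} (hw : w ∈ sphere (0 : E) 1) : R w u = w :=
    reflection_span_add_apply
      ((mem_sphere_zero_iff_norm.1 hu).trans (mem_sphere_zero_iff_norm.1 hw).symm)
  obtain ⟨M, hM⟩ := (isCompact_sphere (0 : E) 1).exists_bound_of_continuousOn hf
  have hker := integrable_abs_inner_rpow hσ hinv hq u
  have hcont : ContinuousWithinAt (fun w ↦ cosineTransform σ q (f ∘ R w) u) (sphere 0 1) u := by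
    refine continuousWithinAt_of_dominated (bound := fun ξ ↦ |⟪u, ξ⟫| ^ q * M)
      (.of_forall fun w ↦ hker.aestronglyMeasurable.mul
        ((hinv (R w)).integrable_comp_of_integrable
          (integrable_of_continuousOn_sphere hσ hf)).aestronglyMeasurable)
      (.of_forall fun w ↦ ?_) (hker.mul_const M) ?_
    · filter_upwards [hσ] with ξ hξ
      rw [norm_mul, Real.norm_of_nonneg (by positivity)]
      gcongr
      exact hM _ (hR_mem hξ w)
    · filter_upwards [hσ] with ξ hξ
      have hRξ : ContinuousWithinAt (fun w ↦ R w ξ) (sphere 0 1) u :=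
        ((continuousAt_reflection_span_singleton hu₀ ξ).comp (f := fun w ↦ u + w)
          (by fun_prop)).continuousWithinAt
      exact continuousWithinAt_const.mul
        ((hf _ (hR_mem hξ u)).comp (f := fun w ↦ R w ξ) hRξ fun w _ ↦ hR_mem hξ w)
  refine hcont.congr (fun w hw ↦ ?_) ?_
  · rw [← cosineTransform_map hinv, hRu hw]
  · rw [← cosineTransform_map hinv, hRu hu]

lemma continuousAt_cosineTransform (hσ : ∀ᵐ ξ ∂σ, ξ ∈ sphere (0 : E) 1)
    (hinv : ∀ R : E ≃ₗᵢ[ℝ] E, MeasurePreserving R σ σ) (hq : -1 < q)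
    (hf : ContinuousOn f (sphere 0 1)) {u : E} (hu : u ≠ 0) :
    ContinuousAt (cosineTransform σ q f) u := by
  have hnorm : ContinuousOn (NormedSpace.normalize : E → E) {0}ᶜ := fun w hw ↦
    ((continuousAt_id.norm.inv₀ (norm_ne_zero_iff.2 hw)).smul continuousAt_id).continuousWithinAt
  have hmaps : MapsTo (NormedSpace.normalize : E → E) {0}ᶜ (sphere 0 1) := fun w hw ↦
    mem_sphere_zero_iff_norm.2 (NormedSpace.norm_normalize_eq_one_iff.2 hw)
  have hunit : ContinuousAt (cosineTransform σ q f ∘ NormedSpace.normalize) u :=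
    ((continuousOn_cosineTransform_sphere hσ hinv hq hf).comp hnorm hmaps).continuousAt
      (isOpen_compl_singleton.mem_nhds hu)
  have hhomog : cosineTransform σ q f =
      fun w ↦ ‖w‖ ^ q * cosineTransform σ q f (NormedSpace.normalize w) := by
    ext w
    rw [← cosineTransform_smul (norm_nonneg w), NormedSpace.norm_smul_normalize]
  rw [hhomog]
  exact (continuousAt_id.norm.rpow_const (.inl (norm_ne_zero_iff.2 hu))).mul hunit

end CosineTransform

section Derivatives

variable {p q : ℝ} {f : E → ℝ}

lemma hasDerivAt_inner_add_smul (x v ξ : E) (t : ℝ) :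
    HasDerivAt (fun s : ℝ ↦ ⟪x + s • v, ξ⟫) ⟪v, ξ⟫ t := by
  simpa [inner_add_left, real_inner_smul_left] using
    ((hasDerivAt_id t).mul_const ⟪v, ξ⟫).const_add ⟪x, ξ⟫

lemma mul_integral_abs_inner_line_rpow (hq : -1 < q) (x v ξ : E) (t₁ t₂ : ℝ) :
    ⟪v, ξ⟫ * ∫ s in t₁..t₂, |⟪x + s • v, ξ⟫| ^ q =
      (q + 1)⁻¹ * (|⟪x + t₂ • v, ξ⟫| ^ q * ⟪x + t₂ • v, ξ⟫ -
        |⟪x + t₁ • v, ξ⟫| ^ q * ⟪x + t₁ • v, ξ⟫) := by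
  simpa [inner_add_left, real_inner_smul_left, mul_comm ⟪v, ξ⟫] using
    mul_integral_abs_add_mul_rpow hq ⟪x, ξ⟫ ⟪v, ξ⟫ t₁ t₂

lemma integral_norm_abs_inner_line_rpow_mul (hq : -1 < q) (x v ξ : E) (c t₁ t₂ : ℝ) :
    ∫ s in uIoc t₁ t₂, ‖|⟪x + s • v, ξ⟫| ^ q * (⟪v, ξ⟫ * c)‖ =
      |(q + 1)⁻¹ * (|⟪x + t₂ • v, ξ⟫| ^ q * ⟪x + t₂ • v, ξ⟫ * c -
        |⟪x + t₁ • v, ξ⟫| ^ q * ⟪x + t₁ • v, ξ⟫ * c)| := by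
  have hnonneg : 0 ≤ ∫ s in uIoc t₁ t₂, |⟪x + s • v, ξ⟫| ^ q :=
    integral_nonneg fun s ↦ by positivity
  simp only [norm_mul, Real.norm_eq_abs, abs_rpow_of_nonneg (abs_nonneg _), abs_abs]
  rw [integral_mul_const, ← sub_mul, ← mul_assoc (q + 1)⁻¹,
    ← mul_integral_abs_inner_line_rpow hq, abs_mul, abs_mul,
    intervalIntegral.abs_intervalIntegral_eq, abs_of_nonneg hnonneg]
  ring

variable [MeasurableSpace E] [BorelSpace E] [FiniteDimensional ℝ E] {σ : Measure E}
  [IsFiniteMeasure σ]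

lemma integrable_oddCosineTransform_kernel (hσ : ∀ᵐ ξ ∂σ, ξ ∈ sphere (0 : E) 1) (hq : -1 < q)
    (hf : ContinuousOn f (sphere 0 1)) (u : E) :
    Integrable (fun ξ ↦ |⟪u, ξ⟫| ^ q * ⟪u, ξ⟫ * f ξ) σ :=
  integrable_of_continuousOn_sphere hσ
    (((continuous_abs_rpow_mul_self hq).comp (by fun_prop :
      Continuous fun ξ ↦ ⟪u, ξ⟫)).continuousOn.mul hf)

lemma hasDerivAt_cosineTransform_line (hσ : ∀ᵐ ξ ∂σ, ξ ∈ sphere (0 : E) 1) (hp : 1 < p)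
    (hf : ContinuousOn f (sphere 0 1)) (x v : E) (t : ℝ) :
    HasDerivAt (fun s : ℝ ↦ cosineTransform σ p f (x + s • v))
      (p * oddCosineTransform σ (p - 2) (fun ξ ↦ ⟪v, ξ⟫ * f ξ) (x + t • v)) t := by
  have hvf : ContinuousOn (fun ξ ↦ ⟪v, ξ⟫ * f ξ) (sphere 0 1) := by fun_prop
  let F' : ℝ → E → ℝ := fun s ξ ↦
    p * (|⟪x + s • v, ξ⟫| ^ (p - 2) * ⟪x + s • v, ξ⟫ * (⟪v, ξ⟫ * f ξ))
  have hF'_cont : ContinuousOn (Function.uncurry F') (closedBall t 1 ×ˢ sphere 0 1) :=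
    continuousOn_const.mul (((continuous_abs_rpow_mul_self (by linarith)).comp (by fun_prop :
      Continuous fun z : ℝ × E ↦ ⟪x + z.1 • v, z.2⟫)).continuousOn.mul
        (hvf.comp continuousOn_snd fun z hz ↦ hz.2))
  obtain ⟨M, hM⟩ := ((isCompact_closedBall t 1).prod
    (isCompact_sphere (0 : E) 1)).exists_bound_of_continuousOn hF'_cont
  have hF_int (s : ℝ) : Integrable (fun ξ ↦ |⟪x + s • v, ξ⟫| ^ p * f ξ) σ :=
    integrable_of_continuousOn_sphere hσ (((by fun_prop :
      Continuous fun ξ ↦ |⟪x + s • v, ξ⟫|).rpow_const fun _ ↦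
        .inr (by linarith)).continuousOn.mul hf)
  have hF'_int := (integrable_oddCosineTransform_kernel hσ (q := p - 2) (by linarith) hvf
    (x + t • v)).const_mul p
  have hderiv := (hasDerivAt_integral_of_dominated_loc_of_deriv_le (μ := σ) (F' := F')
    (bound := fun _ ↦ M) (closedBall_mem_nhds t one_pos)
    (.of_forall fun s ↦ (hF_int s).aestronglyMeasurable) (hF_int t)
    hF'_int.aestronglyMeasurable (hσ.mono fun ξ hξ s hs ↦ hM (s, ξ) ⟨hs, hξ⟩)
    (integrable_const M) (ae_of_all _ fun ξ s _ ↦ ?_)).2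
  · rwa [integral_const_mul] at hderiv
  · refine (((hasDerivAt_abs_rpow ⟪x + s • v, ξ⟫ hp).comp s
      (hasDerivAt_inner_add_smul x v ξ s)).mul_const (f ξ)).congr_deriv ?_
    ring

lemma integrable_prod_cosineTransform_line (hσ : ∀ᵐ ξ ∂σ, ξ ∈ sphere (0 : E) 1) (hq : -1 < q)
    (hf : ContinuousOn f (sphere 0 1)) (x v : E) (t₁ t₂ : ℝ) :
    Integrable (fun z : ℝ × E ↦ |⟪x + z.1 • v, z.2⟫| ^ q * (⟪v, z.2⟫ * f z.2))
      ((volume.restrict (uIoc t₁ t₂)).prod σ) := by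
  have hmeas : AEStronglyMeasurable (fun z : ℝ × E ↦
      |⟪x + z.1 • v, z.2⟫| ^ q * (⟪v, z.2⟫ * f z.2)) ((volume.restrict (uIoc t₁ t₂)).prod σ) :=
    (by fun_prop : Measurable fun z : ℝ × E ↦
      |⟪x + z.1 • v, z.2⟫| ^ q).aestronglyMeasurable.mul
      ((by fun_prop : Measurable fun z : ℝ × E ↦ ⟪v, z.2⟫).aestronglyMeasurable.mul
        (integrable_of_continuousOn_sphere hσ hf).aestronglyMeasurable.comp_snd)
  refine (integrable_prod_iff' hmeas).2 ⟨ae_of_all _ fun ξ ↦ ?_, ?_⟩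
  · rcases eq_or_ne ⟪v, ξ⟫ 0 with hv | hv
    · simp [hv]
    · have hline := intervalIntegrable_abs_add_mul_rpow hq (a := ⟪x, ξ⟫) hv t₁ t₂
      simpa [inner_add_left, real_inner_smul_left, mul_comm ⟪v, ξ⟫] using
        (intervalIntegrable_iff.1 hline).mul_const (⟪v, ξ⟫ * f ξ)
  · simp only [integral_norm_abs_inner_line_rpow_mul hq]
    exact (((integrable_oddCosineTransform_kernel hσ hq hf _).sub
      (integrable_oddCosineTransform_kernel hσ hq hf _)).const_mul _).abs

lemma intervalIntegrable_cosineTransform_line (hσ : ∀ᵐ ξ ∂σ, ξ ∈ sphere (0 : E) 1)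
    (hq : -1 < q) (hf : ContinuousOn f (sphere 0 1)) (x v : E) (t₁ t₂ : ℝ) :
    IntervalIntegrable (fun s : ℝ ↦ cosineTransform σ q (fun ξ ↦ ⟪v, ξ⟫ * f ξ) (x + s • v))
      volume t₁ t₂ :=
  intervalIntegrable_iff.2
    (integrable_prod_cosineTransform_line hσ hq hf x v t₁ t₂).integral_prod_left

lemma integral_cosineTransform_line (hσ : ∀ᵐ ξ ∂σ, ξ ∈ sphere (0 : E) 1) (hq : -1 < q)
    (hf : ContinuousOn f (sphere 0 1)) (x v : E) (t₁ t₂ : ℝ) :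
    ∫ s in t₁..t₂, cosineTransform σ q (fun ξ ↦ ⟪v, ξ⟫ * f ξ) (x + s • v) =
      (q + 1)⁻¹ * (oddCosineTransform σ q f (x + t₂ • v) -
        oddCosineTransform σ q f (x + t₁ • v)) := by
  simp only [cosineTransform, oddCosineTransform]
  rw [intervalIntegral_integral_swap (integrable_prod_cosineTransform_line hσ hq hf x v t₁ t₂),
    ← integral_sub (integrable_oddCosineTransform_kernel hσ hq hf _)
      (integrable_oddCosineTransform_kernel hσ hq hf _), ← integral_const_mul]
  congr 1 with ξ
  rw [intervalIntegral.integral_mul_const, ← sub_mul, ← mul_assoc (q + 1)⁻¹,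
    ← mul_integral_abs_inner_line_rpow hq]
  ring

lemma hasDerivAt_oddCosineTransform_line (hσ : ∀ᵐ ξ ∂σ, ξ ∈ sphere (0 : E) 1)
    (hinv : ∀ R : E ≃ₗᵢ[ℝ] E, MeasurePreserving R σ σ) (hq : -1 < q)
    (hf : ContinuousOn f (sphere 0 1)) (x v : E) {t : ℝ} (hne : x + t • v ≠ 0) :
    HasDerivAt (fun s : ℝ ↦ oddCosineTransform σ q f (x + s • v))
      ((q + 1) * cosineTransform σ q (fun ξ ↦ ⟪v, ξ⟫ * f ξ) (x + t • v)) t := by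
  set φ : ℝ → ℝ := fun s ↦ cosineTransform σ q (fun ξ ↦ ⟪v, ξ⟫ * f ξ) (x + s • v)
  have hvf : ContinuousOn (fun ξ ↦ ⟪v, ξ⟫ * f ξ) (sphere 0 1) := by fun_prop
  have hcont : ∀ s ∈ {s : ℝ | x + s • v ≠ 0}, ContinuousAt φ s := fun s hs ↦
    (continuousAt_cosineTransform hσ hinv hq hvf hs).comp (f := fun s : ℝ ↦ x + s • v) (by fun_prop)
  have hopen : IsOpen {s : ℝ | x + s • v ≠ 0} :=
    isOpen_compl_singleton.preimage (f := fun s : ℝ ↦ x + s • v) (by fun_prop)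
  have hftc := intervalIntegral.integral_hasDerivAt_right
    (intervalIntegrable_cosineTransform_line hσ hq hf x v 0 t)
    (ContinuousAt.stronglyMeasurableAtFilter hopen hcont t hne) (hcont t hne)
  refine ((hftc.const_mul (q + 1)).add_const (oddCosineTransform σ q f x)).congr_of_eventuallyEq
    (.of_forall fun s ↦ ?_)
  dsimp only
  rw [integral_cosineTransform_line hσ hq hf, mul_inv_cancel_left₀ (by linarith)]
  simp

end Derivatives

section Convexity

variable [MeasurableSpace E] [BorelSpace E] [FiniteDimensional ℝ E] {σ : Measure E}
  [IsFiniteMeasure σ] {p : ℝ} {f : E → ℝ}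

lemma cosineTransform_inner_sq_nonneg_of_convexOn (hσ : ∀ᵐ ξ ∂σ, ξ ∈ sphere (0 : E) 1)
    (hinv : ∀ R : E ≃ₗᵢ[ℝ] E, MeasurePreserving R σ σ) (hp : 1 < p)
    (hf : ContinuousOn f (sphere 0 1)) (hconv : ConvexOn ℝ univ (cosineTransform σ p f))
    {u : E} (hu : u ≠ 0) (v : E) :
    0 ≤ cosineTransform σ (p - 2) (fun ξ ↦ ⟪v, ξ⟫ ^ 2 * f ξ) u := by
  have hderiv (t : ℝ) := hasDerivAt_cosineTransform_line hσ hp hf u v t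
  have hmono : Monotone (deriv fun t : ℝ ↦ cosineTransform σ p f (u + t • v)) :=
    monotoneOn_univ.1 ((convexOn_univ_iff_forall_line.1 hconv u v).monotoneOn_deriv
      fun t _ ↦ (hderiv t).differentiableAt)
  have hvf : ContinuousOn (fun ξ ↦ ⟪v, ξ⟫ * f ξ) (sphere 0 1) := by fun_prop
  have hderiv₂ := (hasDerivAt_oddCosineTransform_line hσ hinv (q := p - 2) (by linarith) hvf
    u v (t := 0) (by simpa using hu)).const_mul p
  have hnonneg := hmono.deriv_nonneg (x := 0)
  rw [funext fun t ↦ (hderiv t).deriv, hderiv₂.deriv, ← mul_assoc] at hnonneg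
  have hpos : 0 < p * (p - 2 + 1) := mul_pos (by linarith) (by linarith)
  simpa [sq, mul_assoc] using nonneg_of_mul_nonneg_right hnonneg hpos

lemma convexOn_cosineTransform (hσ : ∀ᵐ ξ ∂σ, ξ ∈ sphere (0 : E) 1) (hp : 1 < p)
    (hf : ContinuousOn f (sphere 0 1))
    (hnonneg : ∀ u ∈ sphere (0 : E) 1, ∀ v,
      0 ≤ cosineTransform σ (p - 2) (fun ξ ↦ ⟪v, ξ⟫ ^ 2 * f ξ) u) :
    ConvexOn ℝ univ (cosineTransform σ p f) := by
  rw [convexOn_univ_iff_forall_line]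
  intro x v
  rcases eq_or_ne v 0 with rfl | hv
  · simpa using convexOn_const _ convex_univ
  have := nontrivial_of_ne v 0 hv
  have hderiv (t : ℝ) := hasDerivAt_cosineTransform_line hσ hp hf x v t
  refine Monotone.convexOn_univ_of_deriv (fun t ↦ (hderiv t).differentiableAt) ?_
  rw [funext fun t ↦ (hderiv t).deriv]
  have hvf : ContinuousOn (fun ξ ↦ ⟪v, ξ⟫ * f ξ) (sphere 0 1) := by fun_prop
  intro t₁ t₂ ht
  have hdiff := integral_cosineTransform_line hσ (q := p - 2) (by linarith) hvf x v t₁ t₂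
  simp only [← mul_assoc, ← sq] at hdiff
  have hint : 0 ≤ ∫ s in t₁..t₂,
      cosineTransform σ (p - 2) (fun ξ ↦ ⟪v, ξ⟫ ^ 2 * f ξ) (x + s • v) :=
    intervalIntegral.integral_nonneg ht fun s _ ↦
      cosineTransform_nonneg_of_sphere (fun e he ↦ hnonneg e he v) _
  rw [hdiff] at hint
  have hpos : 0 < (p - 2 + 1)⁻¹ := inv_pos.2 (by linarith)
  exact mul_le_mul_of_nonneg_left (sub_nonneg.1 (nonneg_of_mul_nonneg_right hint hpos))
    (by linarith)

end Convexity

end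

theorem p_lindquist_criterion_general {E : Type*} [NormedAddCommGroup E] [InnerProductSpace ℝ E]
    [FiniteDimensional ℝ E] [MeasurableSpace E] [BorelSpace E] {p : ℝ} (hp : 1 < p) {f : E → ℝ}
    (hf : ContinuousOn f (sphere 0 1)) {H : E → ℝ}
    (hH : ∀ x, H x = ∫ ξ in sphere (0 : E) 1,
      |⟪x, ξ⟫| ^ p * f ξ ∂(μH[(Module.finrank ℝ E : ℝ) - 1])) :
    ConvexOn ℝ univ H ↔ ∀ u ∈ sphere (0 : E) 1, ∀ x : E,
      0 ≤ ∫ ξ in sphere (0 : E) 1,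
        |⟪u, ξ⟫| ^ (p - 2) * ⟪x, ξ⟫ ^ 2 * f ξ ∂(μH[(Module.finrank ℝ E : ℝ) - 1]) := by
  set σ : Measure E := (μH[(Module.finrank ℝ E : ℝ) - 1]).restrict (sphere 0 1)
  have : IsFiniteMeasure σ := isFiniteMeasure_restrict.2 hausdorffMeasure_sphere_lt_top.ne
  have hσ : ∀ᵐ ξ ∂σ, ξ ∈ sphere (0 : E) 1 := ae_restrict_mem isClosed_sphere.measurableSet
  have hinv : ∀ R : E ≃ₗᵢ[ℝ] E, MeasurePreserving R σ σ := measurePreserving_restrict_sphere _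
  obtain rfl : H = cosineTransform σ p f := funext hH
  have hintegrand (u x : E) : ∫ ξ, |⟪u, ξ⟫| ^ (p - 2) * ⟪x, ξ⟫ ^ 2 * f ξ ∂σ =
      cosineTransform σ (p - 2) (fun ξ ↦ ⟪x, ξ⟫ ^ 2 * f ξ) u := by
    simp only [cosineTransform, mul_assoc]
  simp only [hintegrand]
  exact ⟨fun hconv u hu ↦ cosineTransform_inner_sq_nonneg_of_convexOn hσ hinv hp hf hconv
    (ne_of_mem_sphere hu one_ne_zero), convexOn_cosineTransform hσ hp hf⟩

theorem p_lindquist_criterion (n : ℕ) (hn : 2 ≤ n) (p : ℝ) (hp : 1 < p)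
    (hpe : ∀ k : ℕ, p ≠ 2 * k)
    (f : EuclideanSpace ℝ (Fin n) → ℝ) (hf_cont : Continuous f)
    (hf_even : ∀ ξ, f (-ξ) = f ξ)
    (H : EuclideanSpace ℝ (Fin n) → ℝ)
    (hH : ∀ x, H x = ∫ ξ in sphere (0 : EuclideanSpace ℝ (Fin n)) 1,
      |⟪x, ξ⟫| ^ p * f ξ ∂(μH[(n : ℝ) - 1])) :
    ConvexOn ℝ Set.univ H ↔
      ∀ u ∈ sphere (0 : EuclideanSpace ℝ (Fin n)) 1, ∀ x : EuclideanSpace ℝ (Fin n),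
        0 ≤ ∫ ξ in sphere (0 : EuclideanSpace ℝ (Fin n)) 1,
          |⟪u, ξ⟫| ^ (p - 2) * ⟪x, ξ⟫ ^ 2 * f ξ ∂(μH[(n : ℝ) - 1]) := by
  simpa using p_lindquist_criterion_general hp hf_cont.continuousOn
    (by simpa using hH : ∀ x, H x = _)
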